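/- Let (G_k)_{k=1}^N be arbitrary (not necessarily Hermitian) operators, with G_k acting on H_k, and let G = Σ_{k=1}^N (extension of G_k to H). Then for every density matrix ρ on H, the variance of G is bounded by Var_ρ(G) ≤ ((1/N)·Σ_{k=1}^N ‖G_k‖_∞²) · (N + 2N²·√((1/N)·Σ_{k=1}^N s_k)). -/

import Mathlib

open scoped BigOperators Kronecker Matrix ComplexOrder

noncomputable section
namespace Paper

/-- A density matrix: a positive semidefinite operator of trace one. -/
def IsDensityMatrix {n : Type*} [Fintype n] (ρ : Matrix n n ℂ) : Prop :=
  ρ.PosSemidef ∧ ρ.trace = 1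

/-- The operator norm `‖A‖_∞` (largest singular value) of a matrix,
as the operator norm of the induced map on Euclidean space. -/
noncomputable def opNorm {n : Type*} [Fintype n] [DecidableEq n] (A : Matrix n n ℂ) : ℝ :=
  ‖LinearMap.toContinuousLinearMap (Matrix.toEuclideanLin A)‖

/-- Von Neumann entropy `−∑ λ ln λ` over the eigenvalues; since `Real.log 0 = 0`
in Mathlib, the convention `0 · ln 0 = 0` is automatic. -/
noncomputable def entropy {n : Type*} [Fintype n] [DecidableEq n] (σ : Matrix n n ℂ) : ℝ :=
  if h : σ.IsHermitian then -∑ i, h.eigenvalues i * Real.log (h.eigenvalues i) else 0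

/-- The variance `Var_ρ(A) = Tr[ρ A† A] − |Tr[ρ A]|²`. -/
noncomputable def variance {n : Type*} [Fintype n] (ρ A : Matrix n n ℂ) : ℝ :=
  (ρ * (Aᴴ * A)).trace.re - ‖(ρ * A).trace‖ ^ 2

/-- The trace norm `‖A‖₁ = Tr √(A†A)`: the sum of the singular values. -/
noncomputable def traceNorm {n : Type*} [Fintype n] [DecidableEq n] (A : Matrix n n ℂ) : ℝ :=
  ∑ i, Real.sqrt ((Matrix.posSemidef_conjTranspose_mul_self A).1.eigenvalues i)

/-- The pure state `|v⟩⟨v|` associated with a vector `v`. -/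
def pureState {n : Type*} (v : n → ℂ) : Matrix n n ℂ :=
  Matrix.of fun x y => v x * (starRingEnd ℂ) (v y)

/-- The expectation value `⟨v|M|v⟩`. -/
noncomputable def expval {n : Type*} [Fintype n] (M : Matrix n n ℂ) (v : n → ℂ) : ℂ :=
  ∑ x, ∑ y, (starRingEnd ℂ) (v x) * M x y * v y

variable {N : ℕ} {d : Fin N → Type*} [∀ k, Fintype (d k)] [∀ k, DecidableEq (d k)]

/-- Extension of a local operator on the `k`-th factor to the `N`-fold tensor
product `H = H_1 ⊗ ⋯ ⊗ H_N`, tensoring with the identity on every other factor.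
(The tensor product is realized with index set `∀ j, d j`.) -/
def extendAt (k : Fin N) (A : Matrix (d k) (d k) ℂ) : Matrix (∀ j, d j) (∀ j, d j) ℂ :=
  Matrix.of fun x y => if ∀ j, j ≠ k → x j = y j then A (x k) (y k) else 0

/-- Reduced density matrix on the `k`-th factor: partial trace over all other factors. -/
noncomputable def reduce (k : Fin N) (ρ : Matrix (∀ j, d j) (∀ j, d j) ℂ) :
    Matrix (d k) (d k) ℂ :=
  Matrix.of fun a b => ∑ x : ∀ j, d j, if x k = a then ρ x (Function.update x k b) else 0

/-!
The variance of `∑ G_k` expands into covariances. The diagonal ones are at most `‖G_k‖²`, so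
everything rests on bounding the covariance of `a` on the `k`-th factor with a commuting `b` by
`2 ‖a‖ ‖b‖ √s_k`. Let `p` be the rank-one projection onto an eigenvector of `ρ_k` for its largest
eigenvalue `1 - ε`, let `q = 1 - p`, and write `a = a q + q a p + p a p` with `p a p = c p`. By
Cauchy–Schwarz in the GNS space the first term contributes at most `‖a‖ ‖b‖ √ε`; so does the
second, since `b` commutes with `q a p` and the roles of left and right can be exchanged. Constants
have zero covariance, so `c p` may be replaced by `-c q`, which contributes `2 ‖a‖ ‖b‖ ε`.
For small entropy `√ε + ε ≤ √s_k`, because `-x log x ≥ 2x(1 - √x)` gives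
`s_k ≥ ε (3 - 2√ε - ε)`; for large entropy the trivial bound `‖a‖ ‖b‖` suffices. Summing over
pairs of factors costs two applications of Cauchy–Schwarz.

The tensor product enters only through the commutation of its factors, and the argument takes
place in an arbitrary C⋆-algebra containing commuting matrix algebras.
-/

section Covariance

theorem exists_norm_le_compression_eq_smul {A : Type*} [NonUnitalCStarAlgebra A] {p a : A}
    (hp : IsStarProjection p) {c : ℂ} (hpa : p * a * p = c • p) :
    ∃ c' : ℂ, ‖c'‖ ≤ ‖a‖ ∧ p * a * p = c' • p := by
  rcases eq_or_ne p 0 with rfl | hp0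
  · exact ⟨0, by simp⟩
  refine ⟨c, le_of_mul_le_mul_right ?_ (norm_pos_iff.mpr hp0), hpa⟩
  calc ‖c‖ * ‖p‖ = ‖p * a * p‖ := by rw [hpa, norm_smul]
    _ ≤ ‖p‖ * ‖a‖ * ‖p‖ := norm_mul₃_le
    _ ≤ 1 * ‖a‖ * ‖p‖ := by gcongr; exact hp.norm_le
    _ = ‖a‖ * ‖p‖ := by rw [one_mul]

variable {A : Type*} [CStarAlgebra A] [PartialOrder A]

/-- The covariance `ω(a⋆b) − conj(ω a) ω(b)` of `a` and `b` in the state `ω`, as a sesquilinear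
form conjugate-linear in `a`; on the diagonal it is the variance. -/
def covariance (ω : A →ₚ[ℂ] ℂ) : A →ₗ⋆[ℂ] A →ₗ[ℂ] ℂ :=
  LinearMap.mk₂'ₛₗ (starRingEnd ℂ) (RingHom.id ℂ)
    (fun a b => ω (star a * b) - star (ω a) * ω b)
    (fun a a' b => by simp only [star_add, add_mul, map_add]; ring)
    (fun c a b => by simp [mul_sub, mul_assoc])
    (fun a b b' => by simp only [mul_add, map_add]; ring)
    (fun c a b => by simp only [mul_smul_comm, map_smul, smul_eq_mul, RingHom.id_apply]; ring)

theorem covariance_apply (ω : A →ₚ[ℂ] ℂ) (a b : A) :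
    covariance ω a b = ω (star a * b) - star (ω a) * ω b := rfl

theorem covariance_one_left {ω : A →ₚ[ℂ] ℂ} (hω : ω 1 = 1) (b : A) :
    covariance ω 1 b = 0 := by
  simp [covariance_apply, hω]

variable [StarOrderedRing A]

theorem star_covariance (ω : A →ₚ[ℂ] ℂ) (a b : A) :
    star (covariance ω a b) = covariance ω b a := by
  simp only [covariance_apply, star_sub, star_mul, star_star, ← map_star]

theorem covariance_star_star_of_commute (ω : A →ₚ[ℂ] ℂ) {a b : A} (hab : Commute (star a) b) :
    covariance ω (star b) (star a) = covariance ω a b := by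
  simp only [covariance_apply, star_star, map_star, hab.eq, mul_comm]

theorem norm_toPreGNS_mul_le (ω : A →ₚ[ℂ] ℂ) (a b : A) :
    ‖ω.toPreGNS (a * b)‖ ≤ ‖a‖ * ‖ω.toPreGNS b‖ :=
  (ω.leftMulMapPreGNS a).le_of_opNorm_le
    (LinearMap.mkContinuous_norm_le _ (norm_nonneg a) _) (ω.toPreGNS b)

variable {ω : A →ₚ[ℂ] ℂ}

theorem norm_toPreGNS_le (hω : ω 1 = 1) (a : A) : ‖ω.toPreGNS a‖ ≤ ‖a‖ := by
  simpa [ω.preGNS_norm_def, hω] using norm_toPreGNS_mul_le ω a 1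

theorem sq_norm_toPreGNS_of_isStarProjection {q : A} (hq : IsStarProjection q) :
    ‖ω.toPreGNS q‖ ^ 2 = (ω q).re := by
  have h := ω.preGNS_norm_sq (ω.toPreGNS q)
  rw [ω.ofPreGNS_toPreGNS, hq.isSelfAdjoint.star_eq, hq.isIdempotentElem.eq] at h
  exact_mod_cast congrArg Complex.re h

theorem norm_apply_star_mul_le (a b : A) :
    ‖ω (star a * b)‖ ≤ ‖ω.toPreGNS a‖ * ‖ω.toPreGNS b‖ :=
  norm_inner_le_norm (𝕜 := ℂ) (ω.toPreGNS a) (ω.toPreGNS b)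

theorem covariance_eq_apply_star_mul_sub (a b : A) :
    covariance ω a b = ω (star a * (b - ω b • 1)) := by
  simp [covariance_apply, mul_sub, map_star, mul_comm]

theorem norm_toPreGNS_sub_le (hω : ω 1 = 1) (b : A) :
    ‖ω.toPreGNS (b - ω b • 1)‖ ≤ ‖ω.toPreGNS b‖ := by
  have hcenter : covariance ω (b - ω b • 1) b = covariance ω b b := by
    simp [covariance_one_left hω]
  have hsq : (‖ω.toPreGNS (b - ω b • 1)‖ : ℂ) ^ 2 = ‖ω.toPreGNS b‖ ^ 2 - ‖ω b‖ ^ 2 := by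
    rw [ω.preGNS_norm_sq, ω.preGNS_norm_sq, ω.ofPreGNS_toPreGNS, ω.ofPreGNS_toPreGNS,
      ← covariance_eq_apply_star_mul_sub, hcenter, covariance_apply, Complex.star_def,
      Complex.conj_mul']
  refine le_of_sq_le_sq ?_ (norm_nonneg _)
  have : ‖ω.toPreGNS (b - ω b • 1)‖ ^ 2 = ‖ω.toPreGNS b‖ ^ 2 - ‖ω b‖ ^ 2 := by exact_mod_cast hsq
  linarith [sq_nonneg ‖ω b‖]

theorem norm_covariance_le_norm_toPreGNS_mul_norm (hω : ω 1 = 1) (a b : A) :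
    ‖covariance ω a b‖ ≤ ‖ω.toPreGNS a‖ * ‖b‖ := by
  rw [covariance_eq_apply_star_mul_sub]
  calc ‖ω (star a * (b - ω b • 1))‖
      ≤ ‖ω.toPreGNS a‖ * ‖ω.toPreGNS (b - ω b • 1)‖ := norm_apply_star_mul_le _ _
    _ ≤ ‖ω.toPreGNS a‖ * ‖b‖ := by
        gcongr
        exact (norm_toPreGNS_sub_le hω b).trans (norm_toPreGNS_le hω b)

theorem norm_covariance_le (hω : ω 1 = 1) (a b : A) : ‖covariance ω a b‖ ≤ ‖a‖ * ‖b‖ :=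
  (norm_covariance_le_norm_toPreGNS_mul_norm hω a b).trans
    (mul_le_mul_of_nonneg_right (norm_toPreGNS_le hω a) (norm_nonneg b))

theorem norm_covariance_mul_starProjection_le (hω : ω 1 = 1) (a : A) {q : A}
    (hq : IsStarProjection q) (b : A) :
    ‖covariance ω (a * q) b‖ ≤ ‖a‖ * ‖b‖ * √(ω q).re := by
  have hqω : √(ω q).re = ‖ω.toPreGNS q‖ := by
    rw [← sq_norm_toPreGNS_of_isStarProjection hq, Real.sqrt_sq (norm_nonneg _)]
  calc ‖covariance ω (a * q) b‖ ≤ ‖ω.toPreGNS (a * q)‖ * ‖b‖ :=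
        norm_covariance_le_norm_toPreGNS_mul_norm hω _ _
    _ ≤ ‖a‖ * ‖ω.toPreGNS q‖ * ‖b‖ := by
        gcongr
        exact norm_toPreGNS_mul_le ω a q
    _ = ‖a‖ * ‖b‖ * √(ω q).re := by rw [hqω, mul_right_comm]

theorem norm_covariance_starProjection_mul_le_of_commute (hω : ω 1 = 1) {q : A}
    (hq : IsStarProjection q) {a b : A} (hab : Commute (star (q * a)) b) :
    ‖covariance ω (q * a) b‖ ≤ ‖a‖ * ‖b‖ * √(ω q).re := by
  rw [← covariance_star_star_of_commute ω hab, ← star_covariance, norm_star, star_mul,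
    hq.isSelfAdjoint.star_eq, ← norm_star a, ← norm_star b]
  exact norm_covariance_mul_starProjection_le hω (star a) hq (star b)

theorem norm_apply_le (hω : ω 1 = 1) (a : A) : ‖ω a‖ ≤ ‖a‖ := by
  have hone : ‖ω.toPreGNS 1‖ = 1 := by simp [ω.preGNS_norm_def, hω]
  simpa [hone] using (norm_apply_star_mul_le 1 a).trans
    (mul_le_mul_of_nonneg_left (norm_toPreGNS_le hω a) (norm_nonneg (ω.toPreGNS 1)))

theorem norm_covariance_starProjection_le_of_commute (hω : ω 1 = 1) {q b : A}
    (hq : IsStarProjection q) (hqb : Commute q b) : ‖covariance ω q b‖ ≤ 2 * ((ω q).re * ‖b‖) := by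
  have hωq : ‖ω q‖ = (ω q).re := (Complex.re_eq_norm.mpr (ω.map_nonneg hq.nonneg)).symm
  have hωqb : ‖ω (q * b)‖ ≤ (ω q).re * ‖b‖ := by
    have hqbq : q * b = star q * (b * q) := by
      rw [hq.isSelfAdjoint.star_eq, ← hqb.eq, ← mul_assoc, hq.isIdempotentElem.eq]
    calc ‖ω (q * b)‖ ≤ ‖ω.toPreGNS q‖ * (‖b‖ * ‖ω.toPreGNS q‖) := by
          rw [hqbq]
          exact (norm_apply_star_mul_le _ _).trans (by gcongr; exact norm_toPreGNS_mul_le ω b q)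
      _ = (ω q).re * ‖b‖ := by rw [← sq_norm_toPreGNS_of_isStarProjection hq]; ring
  calc ‖covariance ω q b‖ ≤ ‖ω (q * b)‖ + ‖ω q‖ * ‖ω b‖ := by
        rw [covariance_apply, hq.isSelfAdjoint.star_eq, ← norm_star (ω q), ← norm_mul]
        exact norm_sub_le _ _
    _ ≤ (ω q).re * ‖b‖ + (ω q).re * ‖b‖ := by
        rw [hωq]
        have : 0 ≤ (ω q).re := hωq ▸ norm_nonneg _
        gcongr
        exact norm_apply_le hω b
    _ = 2 * ((ω q).re * ‖b‖) := by ring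

theorem norm_covariance_le_of_compression_eq_smul (hω : ω 1 = 1) {p a b : A} {c : ℂ}
    (hp : IsStarProjection p) (hpa : p * a * p = c • p) (hpb : Commute p b)
    (hab : Commute (star a) b) :
    ‖covariance ω a b‖ ≤ ‖a‖ * ‖b‖ * (2 * (√(ω (1 - p)).re + (ω (1 - p)).re)) := by
  obtain ⟨c, hca, hpa⟩ := exists_norm_le_compression_eq_smul hp hpa
  have hq := hp.one_sub
  have hqb : Commute (1 - p) b := (Commute.one_left b).sub_left hpb
  have hdecomp : a = a * (1 - p) + (1 - p) * (a * p) + (c • 1 - c • (1 - p)) := by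
    rw [← smul_sub, sub_sub_cancel, ← hpa]
    noncomm_ring
  have hright : ‖covariance ω (a * (1 - p)) b‖ ≤ ‖a‖ * ‖b‖ * √(ω (1 - p)).re :=
    norm_covariance_mul_starProjection_le hω a hq b
  have hleft : ‖covariance ω ((1 - p) * (a * p)) b‖ ≤ ‖a‖ * ‖b‖ * √(ω (1 - p)).re := by
    have hcomm : Commute (star ((1 - p) * (a * p))) b := by
      rw [star_mul, star_mul, hp.isSelfAdjoint.star_eq, hq.isSelfAdjoint.star_eq]
      exact (hpb.mul_left hab).mul_left hqb
    refine (norm_covariance_starProjection_mul_le_of_commute hω hq hcomm).trans ?_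
    gcongr
    exact (norm_mul_le a p).trans (mul_le_of_le_one_right (norm_nonneg a) hp.norm_le)
  have hscalar : ‖covariance ω (c • 1 - c • (1 - p)) b‖ ≤
      ‖a‖ * (2 * ((ω (1 - p)).re * ‖b‖)) := by
    have hcov : covariance ω (c • 1 - c • (1 - p)) b = -(star c * covariance ω (1 - p) b) := by
      simp [covariance_one_left hω]
    rw [hcov, norm_neg, norm_mul, norm_star]
    gcongr
    exact norm_covariance_starProjection_le_of_commute hω hq hqb
  calc ‖covariance ω a b‖
      = ‖covariance ω (a * (1 - p)) b + covariance ω ((1 - p) * (a * p)) b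
          + covariance ω (c • 1 - c • (1 - p)) b‖ := by
        conv_lhs => rw [hdecomp]
        rw [LinearMap.map_add₂, LinearMap.map_add₂]
    _ ≤ ‖a‖ * ‖b‖ * √(ω (1 - p)).re + ‖a‖ * ‖b‖ * √(ω (1 - p)).re
          + ‖a‖ * (2 * ((ω (1 - p)).re * ‖b‖)) := norm_add₃_le.trans (by gcongr)
    _ = ‖a‖ * ‖b‖ * (2 * (√(ω (1 - p)).re + (ω (1 - p)).re)) := by ring

end Covariance

section ShannonEntropy

theorem two_mul_mul_one_sub_sqrt_le_negMulLog {x : ℝ} (hx : 0 ≤ x) :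
    2 * (x * (1 - √x)) ≤ Real.negMulLog x := by
  rcases hx.eq_or_lt with rfl | hpos
  · simp
  have hlog := mul_le_mul_of_nonneg_left (Real.log_le_sub_one_of_pos (Real.sqrt_pos.mpr hpos)) hx
  rw [Real.log_sqrt hx] at hlog
  rw [Real.negMulLog]
  linarith

theorem mul_one_sub_le_negMulLog {x : ℝ} (hx : 0 ≤ x) : x * (1 - x) ≤ Real.negMulLog x := by
  have hgap : 2 * (x * (1 - √x)) - x * (1 - x) = x * (1 - √x) ^ 2 := by
    linear_combination (-x) * Real.sq_sqrt hx
  linarith [two_mul_mul_one_sub_sqrt_le_negMulLog hx, mul_nonneg hx (sq_nonneg (1 - √x))]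

variable {ι : Type*} [Fintype ι] {p : ι → ℝ}

theorem one_sub_le_sum_negMulLog (hp : ∀ i, 0 ≤ p i) (hsum : ∑ i, p i = 1) {i₀ : ι}
    (hmax : ∀ i, p i ≤ p i₀) : 1 - p i₀ ≤ ∑ i, Real.negMulLog (p i) :=
  calc 1 - p i₀ = ∑ i, p i * (1 - p i₀) := by rw [← Finset.sum_mul, hsum, one_mul]
    _ ≤ ∑ i, Real.negMulLog (p i) := Finset.sum_le_sum fun i _ =>
        (mul_le_mul_of_nonneg_left (sub_le_sub_left (hmax i) 1) (hp i)).trans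
          (mul_one_sub_le_negMulLog (hp i))

theorem mul_three_sub_le_sum_negMulLog (hp : ∀ i, 0 ≤ p i) (hsum : ∑ i, p i = 1) (i₀ : ι) :
    (1 - p i₀) * (3 - 2 * √(1 - p i₀) - (1 - p i₀)) ≤ ∑ i, Real.negMulLog (p i) := by
  classical
  have hrest : ∑ i ∈ Finset.univ.erase i₀, p i = 1 - p i₀ := by
    rw [← hsum, ← Finset.add_sum_erase _ p (Finset.mem_univ i₀), add_sub_cancel_left]
  have hsmall {i : ι} (hi : i ∈ Finset.univ.erase i₀) :
      2 * (p i * (1 - √(1 - p i₀))) ≤ Real.negMulLog (p i) := by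
    have hle : p i ≤ 1 - p i₀ := hrest ▸ Finset.single_le_sum (fun j _ => hp j) hi
    refine le_trans ?_ (two_mul_mul_one_sub_sqrt_le_negMulLog (hp i))
    have := hp i
    gcongr
  calc (1 - p i₀) * (3 - 2 * √(1 - p i₀) - (1 - p i₀))
      = p i₀ * (1 - p i₀) + ∑ i ∈ Finset.univ.erase i₀, 2 * (p i * (1 - √(1 - p i₀))) := by
        rw [← Finset.mul_sum, ← Finset.sum_mul, hrest]
        ring
    _ ≤ Real.negMulLog (p i₀) + ∑ i ∈ Finset.univ.erase i₀, Real.negMulLog (p i) :=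
        add_le_add (mul_one_sub_le_negMulLog (hp i₀)) (Finset.sum_le_sum fun i hi => hsmall hi)
    _ = ∑ i, Real.negMulLog (p i) :=
        Finset.add_sum_erase _ (fun i => Real.negMulLog (p i)) (Finset.mem_univ i₀)

theorem min_one_le_two_mul_sqrt_sum_negMulLog (hp : ∀ i, 0 ≤ p i) (hsum : ∑ i, p i = 1) {i₀ : ι}
    (hmax : ∀ i, p i ≤ p i₀) :
    min 1 (2 * (√(1 - p i₀) + (1 - p i₀))) ≤ 2 * √(∑ i, Real.negMulLog (p i)) := by
  have hlinear := one_sub_le_sum_negMulLog hp hsum hmax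
  have hquadratic := mul_three_sub_le_sum_negMulLog hp hsum i₀
  have hε : 0 ≤ 1 - p i₀ :=
    sub_nonneg.mpr (hsum ▸ Finset.single_le_sum (fun i _ => hp i) (Finset.mem_univ i₀))
  set s := ∑ i, Real.negMulLog (p i)
  set r := √(1 - p i₀)
  have hr : 0 ≤ r := Real.sqrt_nonneg _
  rw [← Real.sq_sqrt hε] at hlinear hquadratic ⊢
  rcases le_or_gt (1 / 4) s with hs | hs
  · refine (min_le_left _ _).trans ?_
    linarith [Real.le_sqrt_of_sq_le (show (1 / 2 : ℝ) ^ 2 ≤ s by linarith)]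
  · refine (min_le_right _ _).trans (mul_le_mul_of_nonneg_left ?_ zero_le_two)
    -- The first bound only brings `r` below `1 / 2`; the second then improves this to
    -- `2 / 5 < √2 - 1`, where `3 - 2 r - r ^ 2 ≥ (1 + r) ^ 2`.
    have hr_half : r ≤ 1 / 2 := by nlinarith
    have hr_two_fifths : r ≤ 2 / 5 := by nlinarith
    refine Real.le_sqrt_of_sq_le (le_trans ?_ hquadratic)
    have : 0 ≤ 1 - 2 * r - r ^ 2 := by nlinarith
    nlinarith [mul_nonneg (sq_nonneg r) this]

end ShannonEntropy

section TraceFunctional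

open scoped Matrix.Norms.L2Operator MatrixOrder

variable {n : Type*} [Fintype n]

theorem trace_mul_vecMulVec {R : Type*} [CommSemiring R] (M : Matrix n n R) (v w : n → R) :
    (M * Matrix.vecMulVec v w).trace = w ⬝ᵥ (M *ᵥ v) := by
  rw [Matrix.mul_vecMulVec, Matrix.trace_vecMulVec, dotProduct_comm]

theorem vecMulVec_mul_mul_vecMulVec {R : Type*} [CommSemiring R] (v w : n → R)
    (M : Matrix n n R) :
    Matrix.vecMulVec v w * M * Matrix.vecMulVec v w = (w ⬝ᵥ (M *ᵥ v)) • Matrix.vecMulVec v w := by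
  rw [Matrix.vecMulVec_mul, Matrix.vecMulVec_mul_vecMulVec, Matrix.dotProduct_mulVec,
    Matrix.vecMulVec_smul]

theorem isStarProjection_vecMulVec_star {R : Type*} [CommSemiring R] [StarRing R] {v : n → R}
    (hv : star v ⬝ᵥ v = 1) : IsStarProjection (Matrix.vecMulVec v (star v)) where
  isIdempotentElem := by rw [IsIdempotentElem, Matrix.vecMulVec_mul_vecMulVec, hv, one_smul]
  isSelfAdjoint := by
    rw [IsSelfAdjoint, Matrix.star_eq_conjTranspose, Matrix.conjTranspose_vecMulVec, star_star]

variable {ρ : Matrix n n ℂ}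

theorem trace_mul_nonneg (hρ : ρ.PosSemidef) {X : Matrix n n ℂ} (hX : X.PosSemidef) :
    0 ≤ (ρ * X).trace := by
  classical
  obtain ⟨C, rfl⟩ := CStarAlgebra.nonneg_iff_eq_star_mul_self.mp hX.nonneg
  rw [← mul_assoc, Matrix.trace_mul_comm, ← mul_assoc]
  exact (hρ.mul_mul_conjTranspose_same C).trace_nonneg

theorem posSemidef_of_trace_mul_nonneg
    (h : ∀ X : Matrix n n ℂ, X.PosSemidef → 0 ≤ (ρ * X).trace) : ρ.PosSemidef := by
  classical
  rw [← Matrix.isPositive_toEuclideanLin_iff, LinearMap.isPositive_iff_complex]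
  intro x
  have hx : 0 ≤ inner ℂ (Matrix.toEuclideanLin ρ x) x := by
    have := h _ (Matrix.posSemidef_vecMulVec_self_star x.ofLp)
    rw [trace_mul_vecMulVec] at this
    rw [← inner_conj_symm, EuclideanSpace.inner_eq_star_dotProduct, dotProduct_comm]
    exact star_nonneg_iff.mpr this
  exact ⟨(Complex.eq_re_of_ofReal_le hx).symm, (Complex.nonneg_iff.mp hx).1⟩

/-- The positive functional `X ↦ Tr[ρ X]` that the positive semidefinite matrix `ρ` induces on
the C⋆-algebra of matrices; it is a state exactly when `Tr ρ = 1`. -/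
def traceFunctional (hρ : ρ.PosSemidef) : Matrix n n ℂ →ₚ[ℂ] ℂ :=
  .mk₀ (Matrix.traceLinearMap n ℂ ℂ ∘ₗ LinearMap.mulLeft ℂ ρ) fun _ hX =>
    trace_mul_nonneg hρ (Matrix.nonneg_iff_posSemidef.mp hX)

theorem traceFunctional_apply (hρ : ρ.PosSemidef) (X : Matrix n n ℂ) :
    traceFunctional hρ X = (ρ * X).trace := rfl

theorem variance_eq_re_covariance [DecidableEq n] (hρ : ρ.PosSemidef) (X : Matrix n n ℂ) :
    variance ρ X = (covariance (traceFunctional hρ) X X).re := by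
  simp only [variance, covariance_apply, traceFunctional_apply, Matrix.star_eq_conjTranspose,
    Complex.sub_re, Complex.star_def, ← Complex.normSq_eq_conj_mul_self, Complex.ofReal_re,
    Complex.normSq_eq_norm_sq]

end TraceFunctional

theorem opNorm_nonneg {n : Type*} [Fintype n] [DecidableEq n] (X : Matrix n n ℂ) : 0 ≤ opNorm X :=
  norm_nonneg _

section Entropy

variable {n : Type*} [Fintype n] [DecidableEq n] {σ : Matrix n n ℂ}

theorem entropy_eq_sum_negMulLog (hσ : σ.IsHermitian) :
    entropy σ = ∑ i, Real.negMulLog (hσ.eigenvalues i) := by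
  simp only [entropy, dif_pos hσ, Real.negMulLog, neg_mul, Finset.sum_neg_distrib]

theorem sum_eigenvalues (hσ : IsDensityMatrix σ) : ∑ i, hσ.1.1.eigenvalues i = 1 := by
  have htrace := hσ.1.1.trace_eq_sum_eigenvalues.symm.trans hσ.2
  exact Complex.ofReal_injective (by simpa using htrace)

theorem entropy_nonneg (hσ : IsDensityMatrix σ) : 0 ≤ entropy σ := by
  rw [entropy_eq_sum_negMulLog hσ.1.1]
  refine Finset.sum_nonneg fun i _ => Real.negMulLog_nonneg (hσ.1.eigenvalues_nonneg i) ?_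
  rw [← sum_eigenvalues hσ]
  exact Finset.single_le_sum (fun j _ => hσ.1.eigenvalues_nonneg j) (Finset.mem_univ i)

theorem star_eigenvectorBasis_dotProduct_self (hσ : σ.IsHermitian) (i : n) :
    star (hσ.eigenvectorBasis i).ofLp ⬝ᵥ (hσ.eigenvectorBasis i).ofLp = 1 := by
  rw [dotProduct_comm, ← EuclideanSpace.inner_eq_star_dotProduct,
    hσ.eigenvectorBasis.inner_eq_one]

end Entropy

section MatrixSubsystem

variable {n : Type*} [Fintype n] [DecidableEq n] {A : Type*} [CStarAlgebra A] [PartialOrder A]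
  [StarOrderedRing A] {ω : A →ₚ[ℂ] ℂ} {φ : Matrix n n ℂ →⋆ₐ[ℂ] A} {σ : Matrix n n ℂ}

open scoped Matrix.Norms.L2Operator MatrixOrder

theorem norm_map_le_opNorm {A : Type*} [CStarAlgebra A] (φ : Matrix n n ℂ →⋆ₐ[ℂ] A)
    (X : Matrix n n ℂ) : ‖φ X‖ ≤ opNorm X :=
  NonUnitalStarAlgHom.norm_apply_le φ X

theorem isDensityMatrix_of_apply_map_eq_trace (hω : ω 1 = 1)
    (hσ : ∀ X, ω (φ X) = (σ * X).trace) : IsDensityMatrix σ := by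
  refine ⟨posSemidef_of_trace_mul_nonneg fun X hX => ?_, ?_⟩
  · rw [← hσ]
    exact ω.map_nonneg (map_nonneg φ hX.nonneg)
  · rw [← mul_one σ, ← hσ, map_one, hω]

theorem norm_covariance_map_le_of_unit_vector (hω : ω 1 = 1) (hσ : ∀ X, ω (φ X) = (σ * X).trace)
    {v : n → ℂ} (hv : star v ⬝ᵥ v = 1) (X : Matrix n n ℂ) {b : A}
    (hb : ∀ Y, Commute (φ Y) b) :
    ‖covariance ω (φ X) b‖ ≤ opNorm X * ‖b‖ *
      (2 * (√(1 - (star v ⬝ᵥ (σ *ᵥ v)).re) + (1 - (star v ⬝ᵥ (σ *ᵥ v)).re))) := by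
  have hweight : (ω (1 - φ (Matrix.vecMulVec v (star v)))).re =
      1 - (star v ⬝ᵥ (σ *ᵥ v)).re := by
    rw [map_sub, hω, hσ, trace_mul_vecMulVec, Complex.sub_re, Complex.one_re]
  have hproj := (isStarProjection_vecMulVec_star hv).map φ
  have hweight_nonneg := (Complex.nonneg_iff.mp (ω.map_nonneg hproj.one_sub.nonneg)).1
  rw [← hweight]
  refine (norm_covariance_le_of_compression_eq_smul hω hproj
    (c := star v ⬝ᵥ (X *ᵥ v)) ?_ (hb _) (map_star φ X ▸ hb _)).trans ?_
  · rw [← map_mul, ← map_mul, vecMulVec_mul_mul_vecMulVec, map_smul]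
  · gcongr
    exact norm_map_le_opNorm φ X

theorem norm_covariance_map_le_sqrt_entropy (hω : ω 1 = 1) (hσ : ∀ X, ω (φ X) = (σ * X).trace)
    (X : Matrix n n ℂ) {b : A} (hb : ∀ Y, Commute (φ Y) b) :
    ‖covariance ω (φ X) b‖ ≤ 2 * (opNorm X * ‖b‖ * √(entropy σ)) := by
  have hdensity := isDensityMatrix_of_apply_map_eq_trace hω hσ
  have : Nonempty n := by
    by_contra hempty
    rw [not_nonempty_iff] at hempty
    simpa [Matrix.trace] using hdensity.2
  obtain ⟨i, hi⟩ := Finite.exists_max hdensity.1.1.eigenvalues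
  have hmin := min_one_le_two_mul_sqrt_sum_negMulLog hdensity.1.eigenvalues_nonneg
    (sum_eigenvalues hdensity) hi
  rw [← entropy_eq_sum_negMulLog] at hmin
  have htrivial : ‖covariance ω (φ X) b‖ ≤ opNorm X * ‖b‖ * 1 :=
    (norm_covariance_le hω (φ X) b).trans <| by
      rw [mul_one]; gcongr; exact norm_map_le_opNorm φ X
  have hcompress := norm_covariance_map_le_of_unit_vector hω hσ
    (star_eigenvectorBasis_dotProduct_self hdensity.1.1 i) X hb
  have hnorm : 0 ≤ opNorm X * ‖b‖ := mul_nonneg (opNorm_nonneg X) (norm_nonneg b)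
  calc ‖covariance ω (φ X) b‖
      ≤ opNorm X * ‖b‖ * min 1 (2 * (√(1 - hdensity.1.1.eigenvalues i)
          + (1 - hdensity.1.1.eigenvalues i))) := by
        rw [mul_min_of_nonneg _ _ hnorm, hdensity.1.1.eigenvalues_eq i]
        exact le_min htrivial hcompress
    _ ≤ opNorm X * ‖b‖ * (2 * √(entropy σ)) := by gcongr
    _ = 2 * (opNorm X * ‖b‖ * √(entropy σ)) := by ring

end MatrixSubsystem

section SumOfSubsystems

theorem sum_mul_sqrt_mul_sum_le {ι : Type*} [Fintype ι] {a s : ι → ℝ} (ha : ∀ i, 0 ≤ a i)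
    (hs : ∀ i, 0 ≤ s i) :
    (∑ i, a i * √(s i)) * ∑ i, a i ≤ (∑ i, a i ^ 2) * √(Fintype.card ι * ∑ i, s i) := by
  have hweighted : ∑ i, a i * √(s i) ≤ √(∑ i, a i ^ 2) * √(∑ i, s i) := by
    simpa only [Real.sq_sqrt (hs _)] using
      Real.sum_mul_le_sqrt_mul_sqrt Finset.univ a fun i => √(s i)
  have hconstant : ∑ i, a i ≤ √(∑ i, a i ^ 2) * √(Fintype.card ι) := by
    simpa using Real.sum_mul_le_sqrt_mul_sqrt Finset.univ a fun _ => 1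
  calc (∑ i, a i * √(s i)) * ∑ i, a i
      ≤ (√(∑ i, a i ^ 2) * √(∑ i, s i)) * (√(∑ i, a i ^ 2) * √(Fintype.card ι)) := by
        gcongr
        exact Finset.sum_nonneg fun i _ => ha i
    _ = (∑ i, a i ^ 2) * √(Fintype.card ι * ∑ i, s i) := by
        rw [mul_mul_mul_comm, Real.mul_self_sqrt (Finset.sum_nonneg fun i _ => sq_nonneg _),
          Real.sqrt_mul (Nat.cast_nonneg _), mul_comm √(∑ i, s i)]

theorem avg_mul_card_add_sq_mul_sqrt_avg {n : ℕ} (hn : n ≠ 0) (a s : ℝ) :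
    (1 / n * a) * (n + 2 * n ^ 2 * √(1 / n * s)) = a + 2 * (a * √(n * s)) := by
  have hscale : n * s = (n : ℝ) ^ 2 * (1 / n * s) := by field_simp
  rw [hscale, Real.sqrt_mul (sq_nonneg _), Real.sqrt_sq n.cast_nonneg]
  field_simp

variable {ι : Type*} {n : ι → Type*} [∀ i, Fintype (n i)] [∀ i, DecidableEq (n i)]
  {A : Type*} [CStarAlgebra A] [PartialOrder A] [StarOrderedRing A] {ω : A →ₚ[ℂ] ℂ}
  {φ : ∀ i, Matrix (n i) (n i) ℂ →⋆ₐ[ℂ] A} {σ : ∀ i, Matrix (n i) (n i) ℂ}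

theorem re_covariance_map_map_le [DecidableEq ι] (hω : ω 1 = 1)
    (hφ : Pairwise fun i j => ∀ X Y, Commute (φ i X) (φ j Y))
    (hσ : ∀ i X, ω (φ i X) = (σ i * X).trace) (G : ∀ i, Matrix (n i) (n i) ℂ) (i j : ι) :
    (covariance ω (φ i (G i)) (φ j (G j))).re ≤
      (if i = j then opNorm (G i) ^ 2 else 0) +
        2 * (opNorm (G i) * √(entropy (σ i)) * opNorm (G j)) := by
  refine (Complex.re_le_norm _).trans ?_
  rcases eq_or_ne i j with rfl | hij
  · rw [if_pos rfl, sq]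
    have hself := (norm_covariance_le hω (φ i (G i)) (φ i (G i))).trans
      (mul_self_le_mul_self (norm_nonneg _) (norm_map_le_opNorm (φ i) (G i)))
    have := opNorm_nonneg (G i)
    exact hself.trans (le_add_of_nonneg_right (by positivity))
  · rw [if_neg hij, zero_add, mul_right_comm]
    refine (norm_covariance_map_le_sqrt_entropy hω (hσ i) (G i)
      fun Y => hφ hij Y (G j)).trans ?_
    have := opNorm_nonneg (G i)
    gcongr
    exact norm_map_le_opNorm (φ j) (G j)

theorem variance_le_avg_opNorm_sq_mul_entropy_factor_general [Fintype ι] [Nonempty ι] (hω : ω 1 = 1)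
    (hφ : Pairwise fun i j => ∀ X Y, Commute (φ i X) (φ j Y))
    (hσ : ∀ i X, ω (φ i X) = (σ i * X).trace) (G : ∀ i, Matrix (n i) (n i) ℂ) :
    (covariance ω (∑ i, φ i (G i)) (∑ i, φ i (G i))).re ≤
      ((1 / (Fintype.card ι : ℝ)) * ∑ i, opNorm (G i) ^ 2) *
        (Fintype.card ι + 2 * (Fintype.card ι : ℝ) ^ 2 *
          √((1 / (Fintype.card ι : ℝ)) * ∑ i, entropy (σ i))) := by
  classical
  rw [avg_mul_card_add_sq_mul_sqrt_avg Fintype.card_ne_zero]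
  calc (covariance ω (∑ i, φ i (G i)) (∑ i, φ i (G i))).re
      = ∑ i, ∑ j, (covariance ω (φ i (G i)) (φ j (G j))).re := by
        simp only [map_sum, LinearMap.sum_apply, Complex.re_sum]
        exact Finset.sum_comm
    _ ≤ ∑ i, ∑ j, ((if i = j then opNorm (G i) ^ 2 else 0) +
          2 * (opNorm (G i) * √(entropy (σ i)) * opNorm (G j))) :=
        Finset.sum_le_sum fun i _ => Finset.sum_le_sum fun j _ =>
          re_covariance_map_map_le hω hφ hσ G i j
    _ = ∑ i, opNorm (G i) ^ 2 +
          2 * ((∑ i, opNorm (G i) * √(entropy (σ i))) * ∑ i, opNorm (G i)) := by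
        rw [Finset.sum_mul_sum]
        simp only [Finset.sum_add_distrib, Finset.sum_ite_eq, Finset.mem_univ, if_true,
          Finset.mul_sum]
    _ ≤ ∑ i, opNorm (G i) ^ 2 +
          2 * ((∑ i, opNorm (G i) ^ 2) * √(Fintype.card ι * ∑ i, entropy (σ i))) := by
        gcongr _ + 2 * ?_
        exact sum_mul_sqrt_mul_sum_le (fun i => opNorm_nonneg (G i)) fun i =>
          entropy_nonneg (isDensityMatrix_of_apply_map_eq_trace hω (hσ i))

end SumOfSubsystems

section LocalOperators

theorem sum_ite_agree_off (k : Fin N) (x : ∀ j, d j) (f : (∀ j, d j) → ℂ) :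
    (∑ y, if ∀ j, j ≠ k → x j = y j then f y else 0) = ∑ a, f (Function.update x k a) := by
  rw [← Finset.sum_filter]
  symm
  refine Finset.sum_bij (fun a _ => Function.update x k a) ?_ ?_ ?_ (fun _ _ => rfl)
  · intro a _
    simp +contextual
  · intro a _ b _ h
    simpa using congrFun h k
  · intro y hy
    refine ⟨y k, Finset.mem_univ _, ?_⟩
    ext j
    rcases eq_or_ne j k with rfl | hj
    · simp
    · simpa [hj] using (Finset.mem_filter.mp hy).2 j hj

theorem extendAt_mul_apply (k : Fin N) (A : Matrix (d k) (d k) ℂ)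
    (M : Matrix (∀ j, d j) (∀ j, d j) ℂ) (x z : ∀ j, d j) :
    (extendAt k A * M) x z = ∑ a, A (x k) a * M (Function.update x k a) z := by
  simp only [Matrix.mul_apply, extendAt, Matrix.of_apply, ite_mul, zero_mul]
  rw [sum_ite_agree_off k x fun y => A (x k) (y k) * M y z]
  simp

theorem extendAt_mul (k : Fin N) (A B : Matrix (d k) (d k) ℂ) :
    extendAt k (A * B) = extendAt k A * extendAt k B := by
  ext x z
  rw [extendAt_mul_apply]
  have h (a : d k) : (∀ j, j ≠ k → Function.update x k a j = z j) ↔ ∀ j, j ≠ k → x j = z j :=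
    forall₂_congr fun j hj => by rw [Function.update_of_ne hj]
  simp only [extendAt, Matrix.of_apply, h, Function.update_self, Matrix.mul_apply]
  split_ifs <;> simp

theorem extendAt_mul_extendAt_apply {k l : Fin N} (hkl : k ≠ l) (A : Matrix (d k) (d k) ℂ)
    (B : Matrix (d l) (d l) ℂ) (x z : ∀ j, d j) :
    (extendAt k A * extendAt l B) x z =
      if ∀ j, j ≠ k → j ≠ l → x j = z j then A (x k) (z k) * B (x l) (z l) else 0 := by
  rw [extendAt_mul_apply]
  have h (a : d k) : (∀ j, j ≠ l → Function.update x k a j = z j) ↔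
      a = z k ∧ ∀ j, j ≠ k → j ≠ l → x j = z j := by
    constructor
    · intro h
      refine ⟨by simpa using h k hkl, fun j hk hl => ?_⟩
      simpa [hk] using h j hl
    · rintro ⟨rfl, h⟩ j hl
      rcases eq_or_ne j k with rfl | hk
      · simp
      · simpa [hk] using h j hk hl
  simp only [extendAt, Matrix.of_apply, h, Function.update_of_ne hkl.symm]
  by_cases hz : ∀ j, j ≠ k → j ≠ l → x j = z j
  · simp only [and_iff_left hz, if_pos hz]
    simp
  · simp only [hz, and_false, if_false, mul_zero, Finset.sum_const_zero]

theorem commute_extendAt {k l : Fin N} (hkl : k ≠ l) (A : Matrix (d k) (d k) ℂ)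
    (B : Matrix (d l) (d l) ℂ) : Commute (extendAt k A) (extendAt l B) := by
  ext x z
  rw [extendAt_mul_extendAt_apply hkl, extendAt_mul_extendAt_apply hkl.symm]
  have h : (∀ j, j ≠ k → j ≠ l → x j = z j) ↔ ∀ j, j ≠ l → j ≠ k → x j = z j :=
    forall_congr' fun _ => ⟨fun h hl hk => h hk hl, fun h hk hl => h hl hk⟩
  simp only [h, mul_comm]

/-- The embedding `A ↦ 1 ⊗ ⋯ ⊗ A ⊗ ⋯ ⊗ 1` of the operators on the `k`-th factor, that is
`extendAt k`, as a star algebra homomorphism. -/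
def extendHom (k : Fin N) :
    Matrix (d k) (d k) ℂ →⋆ₐ[ℂ] Matrix (∀ j, d j) (∀ j, d j) ℂ where
  toFun := extendAt k
  map_one' := by
    ext x y
    simp only [extendAt, Matrix.of_apply, Matrix.one_apply, funext_iff, ← ite_and]
    congr 1
    refine propext ⟨fun h j => ?_, fun h => ⟨fun j _ => h j, h k⟩⟩
    rcases eq_or_ne j k with rfl | hj
    exacts [h.2, h.1 j hj]
  map_mul' := extendAt_mul k
  map_zero' := by
    ext x y
    simp [extendAt]
  map_add' A B := by
    ext x y
    simp only [extendAt, Matrix.of_apply, Matrix.add_apply]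
    split_ifs <;> simp
  commutes' c := by
    ext x y
    simp only [extendAt, Matrix.of_apply, Matrix.algebraMap_matrix_apply, funext_iff, ← ite_and]
    congr 1
    refine propext ⟨fun h j => ?_, fun h => ⟨fun j _ => h j, h k⟩⟩
    rcases eq_or_ne j k with rfl | hj
    exacts [h.2, h.1 j hj]
  map_star' A := by
    ext x y
    simp only [extendAt, Matrix.of_apply, Matrix.star_apply, eq_comm (a := y _), apply_ite star,
      star_zero]

theorem extendHom_apply (k : Fin N) (A : Matrix (d k) (d k) ℂ) :
    extendHom k A = extendAt k A := rfl

theorem trace_mul_extendAt (k : Fin N) (ρ : Matrix (∀ j, d j) (∀ j, d j) ℂ)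
    (A : Matrix (d k) (d k) ℂ) :
    (ρ * extendAt k A).trace = (reduce k ρ * A).trace := by
  have hdiag (x : ∀ j, d j) : (ρ * extendAt k A) x x =
      ∑ b, ρ x (Function.update x k b) * A b (x k) := by
    simp only [Matrix.mul_apply, extendAt, Matrix.of_apply, mul_ite, mul_zero]
    simp_rw [eq_comm (b := x _)]
    rw [sum_ite_agree_off k x fun y => ρ x y * A (y k) (x k)]
    simp
  simp only [Matrix.trace, Matrix.diag_apply, hdiag, reduce, Matrix.mul_apply, Matrix.of_apply,
    Finset.sum_mul, ite_mul, zero_mul]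
  symm
  calc ∑ a, ∑ b, ∑ x : ∀ j, d j, (if x k = a then ρ x (Function.update x k b) * A b a else 0)
      = ∑ a, ∑ x : ∀ j, d j, ∑ b,
        if x k = a then ρ x (Function.update x k b) * A b a else 0 :=
        Finset.sum_congr rfl fun _ _ => Finset.sum_comm
    _ = ∑ x : ∀ j, d j, ∑ b, ∑ a,
        if x k = a then ρ x (Function.update x k b) * A b a else 0 := by
        rw [Finset.sum_comm]
        exact Finset.sum_congr rfl fun _ _ => Finset.sum_comm
    _ = ∑ x : ∀ j, d j, ∑ b, ρ x (Function.update x k b) * A b (x k) := by simp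

end LocalOperators

/-- Lemma 1a of the paper. For arbitrary (not necessarily Hermitian)
operators `G_k` on `H_k` and `G = Σ_k (extension of G_k to H)`, and any density matrix `ρ`
on `H`, the variance of `G` is bounded by
`Var_ρ(G) ≤ ((1/N)·Σ_k ‖G_k‖_∞²) · (N + 2N²·√((1/N)·Σ_k s_k))`,
where `s_k` is the von Neumann entropy of the reduced density matrix `ρ_k`. -/
theorem variance_le_avg_opNorm_sq_mul_entropy_factor
    [∀ k, Nonempty (d k)] (hN : 1 ≤ N)
    (G : ∀ k, Matrix (d k) (d k) ℂ)
    (ρ : Matrix (∀ j, d j) (∀ j, d j) ℂ) (hρ : IsDensityMatrix ρ) :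
    variance ρ (∑ k, extendAt k (G k)) ≤
      ((1 / (N : ℝ)) * ∑ k, opNorm (G k) ^ 2) *
        ((N : ℝ) + 2 * (N : ℝ) ^ 2 *
          Real.sqrt ((1 / (N : ℝ)) * ∑ k, entropy (reduce k ρ))) := by
  have : NeZero N := ⟨Nat.ne_of_gt hN⟩
  rw [variance_eq_re_covariance hρ.1]
  open scoped Matrix.Norms.L2Operator MatrixOrder in
  simpa only [Fintype.card_fin, extendHom_apply] using
    variance_le_avg_opNorm_sq_mul_entropy_factor_general (ω := traceFunctional hρ.1)
      (φ := fun k => extendHom k) ((congrArg _ (mul_one ρ)).trans hρ.2)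
      (fun _ _ hkl => commute_extendAt hkl) (fun k => trace_mul_extendAt k ρ) G

end Paper
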